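/- Let D be a strong digraph of order n ≥ 2. If every vertex x of D satisfies d(x) ≥ n, then D is Hamiltonian. -/

import Mathlib

/-! A digraph on a vertex type `V` is given by its arc relation `A : V → V → Prop`
(this automatically forbids multiple arcs); looplessness is expressed by the
hypothesis `Irreflexive A`. -/

/-- The degree of `x`: its out-degree plus its in-degree. -/
noncomputable def degree {V : Type*} (A : V → V → Prop) (x : V) : ℕ :=
  {y | A x y}.ncard + {y | A y x}.ncard

/-- `degreeIn A x S` is the number of arcs between `x` and vertices of `S`,
in both directions. -/
noncomputable def degreeIn {V : Type*} (A : V → V → Prop) (x : V) (S : Set V) : ℕ :=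
  {y ∈ S | A x y}.ncard + {y ∈ S | A y x}.ncard

/-- `c : Fin m → V` is a directed cycle of length `m` (indices taken mod `m`). -/
def IsCycle {V : Type*} (A : V → V → Prop) {m : ℕ} (c : Fin m → V) : Prop :=
  2 ≤ m ∧ Function.Injective c ∧
    ∀ i : Fin m, A (c i) (c ⟨(i.val + 1) % m, Nat.mod_lt _ i.pos⟩)

/-- `p : Fin m → V` is a directed path on `m` vertices (of length `m - 1`). -/
def IsPath {V : Type*} (A : V → V → Prop) {m : ℕ} (p : Fin m → V) : Prop :=
  Function.Injective p ∧ ∀ (i : Fin m) (h : i.val + 1 < m), A (p i) (p ⟨i.val + 1, h⟩)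

/-- A digraph is Hamiltonian if it has a directed cycle through all of its vertices. -/
def IsHamiltonian {V : Type*} [Fintype V] (A : V → V → Prop) : Prop :=
  ∃ c : Fin (Fintype.card V) → V, IsCycle A c ∧ Function.Surjective c

/-- Reachability by a directed path staying inside the set `S`. -/
def ReachIn {V : Type*} (A : V → V → Prop) (S : Set V) : V → V → Prop :=
  Relation.ReflTransGen (fun u v => u ∈ S ∧ v ∈ S ∧ A u v)

/-- A digraph is strong if every vertex is reachable from every other by a directed path. -/
def IsStrong {V : Type*} (A : V → V → Prop) : Prop :=
  ∀ x y : V, Relation.ReflTransGen A x y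

/-- A digraph is `k`-strong if it has at least `k + 1` vertices and the deletion of
any set of at most `k - 1` vertices leaves a strong digraph. -/
def IsKStrong {V : Type*} [Fintype V] (A : V → V → Prop) (k : ℕ) : Prop :=
  k + 1 ≤ Fintype.card V ∧
    ∀ S : Set V, S.ncard ≤ k - 1 → ∀ x ∈ Sᶜ, ∀ y ∈ Sᶜ, ReachIn A Sᶜ x y

/-!
The argument is Bondy and Thomassen's for Meyniel's theorem, which imposes the degree condition only
on pairs of non-adjacent vertices. Let `c` be a longest cycle and suppose that it misses a vertex.
By strong connectivity some path leaves `c` at `u`, runs outside `c`, and returns at `v`. Choose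
such a path so that the set `Q` of vertices of `c` strictly between `u` and `v` is as small as
possible, and let `R` be the remaining segment of `c`, from `v` to `u`. Insert as many vertices of
`Q` as possible into `R`, keeping its ends: some `y ∈ Q` is left over, for otherwise the extended
segment and the path outside `c` would close up to a longer cycle. By minimality of `Q`, the first
vertex `a` of the path outside `c` is not adjacent to `Q`, and no vertex outside `c` is the middle
of a path of length two between `a` and `y`. As a vertex that cannot be inserted into a path on `k`
vertices has at most `k + 1` arcs to or from it, counting the arcs at `a` and `y` gives
`d(a) + d(y) ≤ 2n - 2`.
-/

/-- `p` lists the vertices of a directed path from `u` to `v`; the list form of `IsPath`, with the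
ends made explicit. -/
structure IsPathList {V : Type*} (A : V → V → Prop) (u v : V) (p : List V) : Prop where
  nodup : p.Nodup
  isChain : p.IsChain A
  head?_eq : p.head? = some u
  getLast?_eq : p.getLast? = some v

/-- `c` is a directed cycle, up to rotation; unlike in `IsCycle`, the empty cycle and loops are
allowed. -/
structure IsDirectedCycle {V : Type*} (A : V → V → Prop) (c : Cycle V) : Prop where
  nodup : c.Nodup
  chain : c.Chain A

/-- There is a walk from `u` to `v` with nonempty interior, all of it outside `S`. The ends `u` and
`v` may coincide. -/
def HasDetour {V : Type*} (A : V → V → Prop) (S : Set V) (u v : V) : Prop :=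
  ∃ a b, a ∉ S ∧ A u a ∧ ReachIn A Sᶜ a b ∧ A b v

/-- The vertex `x` can be inserted between two consecutive vertices of the path `l`. -/
def IsInsertable {V : Type*} (A : V → V → Prop) (x : V) (l : List V) : Prop :=
  ∃ p q l₁ l₂, l = l₁ ++ p :: q :: l₂ ∧ A p x ∧ A x q

section Meyniel

variable {V : Type*} {A : V → V → Prop}

lemma degree_eq_degreeIn_univ (x : V) : degree A x = degreeIn A x Set.univ := by
  simp only [degree, degreeIn, Set.mem_univ, true_and]

lemma degreeIn_add_degreeIn_sdiff [Finite V] (x : V) {S T : Set V} (hTS : T ⊆ S) :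
    degreeIn A x T + degreeIn A x (S \ T) = degreeIn A x S := by
  have split (P : V → Prop) :
      {y ∈ T | P y}.ncard + {y ∈ S \ T | P y}.ncard = {y ∈ S | P y}.ncard := by
    have hsub : {y ∈ T | P y} ⊆ {y ∈ S | P y} := fun y hy => ⟨hTS hy.1, hy.2⟩
    have hdiff : {y ∈ S \ T | P y} = {y ∈ S | P y} \ {y ∈ T | P y} := by
      ext y
      simp only [Set.mem_ofPred_eq, Set.mem_sdiff]
      tauto
    rw [add_comm, hdiff, Set.ncard_sdiff_add_ncard_of_subset hsub]
  rw [degreeIn, degreeIn, degreeIn, ← split, ← split fun y => A y x]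
  omega

lemma degree_eq_degreeIn_add_degreeIn_compl [Finite V] (x : V) (S : Set V) :
    degree A x = degreeIn A x S + degreeIn A x Sᶜ := by
  rw [degree_eq_degreeIn_univ, Set.compl_eq_univ_sdiff,
    degreeIn_add_degreeIn_sdiff x (Set.subset_univ S)]

lemma degreeIn_eq_of_subset {x : V} {S T : Set V} (hTS : T ⊆ S)
    (h : ∀ w ∈ S \ T, ¬ A x w ∧ ¬ A w x) : degreeIn A x S = degreeIn A x T := by
  have shrink (P : V → Prop) (hP : ∀ w ∈ S \ T, ¬ P w) : {w ∈ S | P w} = {w ∈ T | P w} := by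
    ext w
    exact ⟨fun hw => ⟨by_contra fun hwT => hP w ⟨hw.1, hwT⟩ hw.2, hw.2⟩,
      fun hw => ⟨hTS hw.1, hw.2⟩⟩
  rw [degreeIn, degreeIn, shrink _ fun w hw => (h w hw).1, shrink _ fun w hw => (h w hw).2]

lemma degreeIn_sdiff_singleton {x w : V} (S : Set V) (hxw : ¬ A x w) (hwx : ¬ A w x) :
    degreeIn A x (S \ {w}) = degreeIn A x S := by
  refine (degreeIn_eq_of_subset Set.sdiff_subset fun z hz => ?_).symm
  obtain rfl : z = w := by_contra fun hzw => hz.2 ⟨hz.1, hzw⟩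
  exact ⟨hxw, hwx⟩

lemma ncard_sep_add_ncard_sep_le [Finite V] {S : Set V} {P P' : V → Prop}
    (h : ∀ w ∈ S, ¬ (P w ∧ P' w)) :
    {w ∈ S | P w}.ncard + {w ∈ S | P' w}.ncard ≤ S.ncard := by
  rw [← Set.ncard_union_eq (Set.disjoint_left.2 fun w hw hw' => h w hw.1 ⟨hw.2, hw'.2⟩)]
  exact Set.ncard_le_ncard (Set.union_subset (Set.sep_subset _ _) (Set.sep_subset _ _))

lemma degreeIn_add_degreeIn_le [Finite V] {x y : V} {S : Set V}
    (hxy : ∀ w ∈ S, ¬ (A x w ∧ A w y)) (hyx : ∀ w ∈ S, ¬ (A y w ∧ A w x)) :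
    degreeIn A x S + degreeIn A y S ≤ 2 * S.ncard := by
  have h₁ := ncard_sep_add_ncard_sep_le hxy
  have h₂ := ncard_sep_add_ncard_sep_le hyx
  rw [degreeIn, degreeIn]
  omega

lemma degreeIn_le_two_mul_ncard [Finite V] (x : V) (S : Set V) :
    degreeIn A x S ≤ 2 * S.ncard := by
  rw [degreeIn, two_mul]
  exact add_le_add (Set.ncard_le_ncard (Set.sep_subset _ _))
    (Set.ncard_le_ncard (Set.sep_subset _ _))

lemma countP_add_countP_le_of_isChain {α : Type*} {p q : α → Bool} {l : List α}
    (h : l.IsChain fun x y => ¬ (p x ∧ q y)) : l.countP p + l.countP q ≤ l.length + 1 := by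
  have tail_bound (x : α) (l : List α) (h : (x :: l).IsChain fun x y => ¬ (p x ∧ q y)) :
      (x :: l).countP p + l.countP q ≤ l.length + 1 := by
    induction l generalizing x with
    | nil => grind
    | cons y l ih => grind
  cases l with
  | nil => simp
  | cons x l => grind

lemma ncard_sep_mem_list_le_countP (l : List V) (p : V → Bool) :
    {w ∈ {w | w ∈ l} | p w}.ncard ≤ l.countP p := by
  classical
  have : {w ∈ {w | w ∈ l} | p w} = ((l.filter p).toFinset : Set V) := by ext w; simp
  rw [this, Set.ncard_coe_finset, List.countP_eq_length_filter]
  exact (l.filter p).toFinset_card_le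

lemma not_isInsertable_iff_isChain {x : V} {l : List V} :
    ¬ IsInsertable A x l ↔ l.IsChain fun p q => ¬ (A p x ∧ A x q) := by
  rw [List.isChain_iff_forall_rel_of_append_cons_cons, IsInsertable]
  grind

lemma degreeIn_le_length_add_one {x : V} {l : List V} (h : ¬ IsInsertable A x l) :
    degreeIn A x {w | w ∈ l} ≤ l.length + 1 := by
  classical
  have hcount : l.countP (fun w => A w x) + l.countP (fun w => A x w) ≤ l.length + 1 :=
    countP_add_countP_le_of_isChain (by simpa using not_isInsertable_iff_isChain.1 h)
  have hout := ncard_sep_mem_list_le_countP l fun w => A x w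
  have hin := ncard_sep_mem_list_le_countP l fun w => A w x
  simp only [decide_eq_true_eq] at hout hin
  rw [degreeIn]
  omega

lemma degree_add_degree_add_two_le [Finite V] {S T T' : Set V} {a y : V}
    (hirr : ∀ x, ¬ A x x) (hTT' : T ⊆ T') (hT'S : T' ⊆ S) (ha : a ∉ S) (hyS : y ∈ S)
    (hyT' : y ∉ T') (haST : ∀ w ∈ S \ T, ¬ A a w ∧ ¬ A w a)
    (hay : ∀ w ∉ S, ¬ (A a w ∧ A w y)) (hya : ∀ w ∉ S, ¬ (A y w ∧ A w a))
    (haT : degreeIn A a T ≤ T.ncard + 1) (hyT : degreeIn A y T' ≤ T'.ncard + 1) :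
    degree A a + degree A y + 2 ≤ 2 * Nat.card V := by
  have hya_nonadj := haST y ⟨hyS, fun h => hyT' (hTT' h)⟩
  have haS : degreeIn A a S ≤ T.ncard + 1 := by
    rwa [degreeIn_eq_of_subset (hTT'.trans hT'S) haST]
  have hT'Sy : T' ⊆ S \ {y} := Set.subset_sdiff_singleton hT'S hyT'
  have hyS_le : degreeIn A y S ≤ T'.ncard + 1 + 2 * ((S \ {y}) \ T').ncard := by
    rw [← degreeIn_sdiff_singleton S (hirr y) (hirr y), ← degreeIn_add_degreeIn_sdiff y hT'Sy]
    exact add_le_add hyT (degreeIn_le_two_mul_ncard y _)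
  have houtside : degreeIn A a Sᶜ + degreeIn A y Sᶜ ≤ 2 * (Sᶜ \ {a}).ncard := by
    rw [← degreeIn_sdiff_singleton Sᶜ (hirr a) (hirr a),
      ← degreeIn_sdiff_singleton Sᶜ hya_nonadj.2 hya_nonadj.1]
    exact degreeIn_add_degreeIn_le (fun w hw => hay w hw.1) fun w hw => hya w hw.1
  have hdeg_a := degree_eq_degreeIn_add_degreeIn_compl (A := A) a S
  have hdeg_y := degree_eq_degreeIn_add_degreeIn_compl (A := A) y S
  have hcard := Set.ncard_add_ncard_compl S
  have hcard_a := Set.ncard_sdiff_singleton_add_one (s := Sᶜ) ha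
  have hcard_y := Set.ncard_sdiff_singleton_add_one hyS
  have hcard_T' := Set.ncard_sdiff_add_ncard_of_subset hT'Sy
  have hcard_T := Set.ncard_le_ncard hTT'
  omega

lemma exists_isPathList_of_reflTransGen {r : V → V → Prop} {a b : V}
    (h : Relation.ReflTransGen r a b) : ∃ p, IsPathList r a b p := by
  induction h using Relation.ReflTransGen.head_induction_on with
  | refl => exact ⟨[b], by simp, by simp, rfl, rfl⟩
  | @head a c hac _ ih =>
    obtain ⟨p, hp⟩ := ih
    by_cases hap : a ∈ p
    · obtain ⟨s, t, rfl⟩ := List.append_of_mem hap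
      exact ⟨a :: t, hp.nodup.of_append_right, hp.isChain.right_of_append, rfl,
        by rw [← hp.getLast?_eq, List.getLast?_append_cons]⟩
    · obtain ⟨t, rfl⟩ := List.head?_eq_some_iff.1 hp.head?_eq
      exact ⟨a :: c :: t, List.nodup_cons.2 ⟨hap, hp.nodup⟩,
        List.isChain_cons_cons.2 ⟨hac, hp.isChain⟩, rfl,
        by rw [List.getLast?_cons_cons, hp.getLast?_eq]⟩

lemma exists_isPathList_of_reachIn {S : Set V} {a b : V} (ha : a ∈ S) (h : ReachIn A S a b) :
    ∃ p, IsPathList A a b p ∧ ∀ w ∈ p, w ∈ S := by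
  obtain ⟨p, hp⟩ := exists_isPathList_of_reflTransGen h
  refine ⟨p, ⟨hp.nodup, hp.isChain.imp fun _ _ h => h.2.2, hp.head?_eq, hp.getLast?_eq⟩,
    hp.isChain.induction (· ∈ S) p (fun _ _ h _ => h.2.1) fun hne => ?_⟩
  rwa [Option.some_injective _ ((List.head?_eq_some_head hne).symm.trans hp.head?_eq)]

lemma IsPathList.exists_perm_cons {u v x : V} {p : List V} (hp : IsPathList A u v p) (hx : x ∉ p)
    (h : IsInsertable A x p) : ∃ p', IsPathList A u v p' ∧ p'.Perm (x :: p) := by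
  obtain ⟨y, z, l₁, l₂, rfl, hyx, hxz⟩ := h
  have hperm : (l₁ ++ y :: x :: z :: l₂).Perm (x :: (l₁ ++ y :: z :: l₂)) := by
    simpa using List.perm_middle (a := x) (l₁ := l₁ ++ [y]) (l₂ := z :: l₂)
  refine ⟨_, ⟨hperm.nodup_iff.2 (List.nodup_cons.2 ⟨hx, hp.nodup⟩), ?_, ?_, ?_⟩, hperm⟩
  · have := hp.isChain
    simp only [List.isChain_append_cons_cons, List.isChain_cons_cons] at this ⊢
    exact ⟨this.1, hyx, hxz, this.2.2⟩
  · rw [← hp.head?_eq]; cases l₁ <;> rfl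
  · rw [← hp.getLast?_eq]; simp [List.getLast?_append]

lemma IsPathList.exists_maximal_insertion {u v : V} {R : List V} (hR : IsPathList A v u R)
    (Q : List V) : ∃ R', IsPathList A v u R' ∧ R ⊆ R' ∧ R' ⊆ R ++ Q ∧
      ∀ y ∈ Q, y ∉ R' → ¬ IsInsertable A y R' := by
  let extensions : Set (List V) := {R' | IsPathList A v u R' ∧ R ⊆ R' ∧ R' ⊆ R ++ Q}
  have hfin : (List.length '' extensions).Finite := by
    refine (Set.finite_Iic (R ++ Q).length).subset ?_
    rintro _ ⟨R', hR', rfl⟩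
    exact (hR'.1.nodup.subperm hR'.2.2).length_le
  obtain ⟨R', ⟨hpath, hsub, hsup⟩, hmax⟩ := Set.Finite.exists_maximalFor' List.length extensions
    hfin ⟨R, hR, List.Subset.refl _, List.subset_append_left _ _⟩
  refine ⟨R', hpath, hsub, hsup, fun y hyQ hyR' hins => ?_⟩
  obtain ⟨R'', hpath', hperm⟩ := hpath.exists_perm_cons hyR' hins
  have hlen : R''.length = R'.length + 1 := hperm.length_eq
  have hext : R'' ∈ extensions := by
    refine ⟨hpath', fun w hw => hperm.mem_iff.2 (List.mem_cons_of_mem _ (hsub hw)), fun w hw => ?_⟩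
    rcases List.mem_cons.1 (hperm.mem_iff.1 hw) with rfl | hw
    exacts [List.mem_append_right _ hyQ, hsup hw]
  have := hmax hext (by omega)
  omega

lemma cycle_chain_coe_append_iff {R Q : List V} {u v : V} (hv : R.head? = some v)
    (hu : R.getLast? = some u) :
    Cycle.Chain A (R ++ Q : List V) ↔ R.IsChain A ∧ (u :: (Q ++ [v])).IsChain A := by
  obtain ⟨r, rfl⟩ := List.head?_eq_some_iff.1 hv
  rw [List.cons_append, Cycle.chain_coe_cons, List.append_assoc, ← List.cons_append,
    List.isChain_append, List.isChain_cons (x := u)]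
  simp only [hu, Option.mem_some_iff, forall_eq', and_comm]

lemma IsDirectedCycle.isPathList {R Q : List V} {u v : V}
    (h : IsDirectedCycle A (R ++ Q : List V)) (hv : R.head? = some v)
    (hu : R.getLast? = some u) : IsPathList A v u R :=
  ⟨(Cycle.nodup_coe_iff.1 h.nodup).of_append_left,
    ((cycle_chain_coe_append_iff hv hu).1 h.chain).1, hv, hu⟩

lemma IsDirectedCycle.replace_segment {R R' Q : List V} {u v : V}
    (h : IsDirectedCycle A (R ++ Q : List V)) (hR : IsPathList A v u R)
    (hR' : IsPathList A v u R') (hdisj : R'.Disjoint Q) :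
    IsDirectedCycle A (R' ++ Q : List V) where
  nodup := Cycle.nodup_coe_iff.2
    (hR'.nodup.append (Cycle.nodup_coe_iff.1 h.nodup).of_append_right hdisj)
  chain := (cycle_chain_coe_append_iff hR'.head?_eq hR'.getLast?_eq).2
    ⟨hR'.isChain, ((cycle_chain_coe_append_iff hR.head?_eq hR.getLast?_eq).1 h.chain).2⟩

lemma IsPathList.isDirectedCycle_append {R p : List V} {u v a b : V} (hR : IsPathList A v u R)
    (hp : IsPathList A a b p) (hdisj : R.Disjoint p) (hua : A u a) (hbv : A b v) :
    IsDirectedCycle A (R ++ p : List V) where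
  nodup := Cycle.nodup_coe_iff.2 (hR.nodup.append hp.nodup hdisj)
  chain := by
    refine (cycle_chain_coe_append_iff hR.head?_eq hR.getLast?_eq).2 ⟨hR.isChain, ?_⟩
    rw [List.isChain_cons, List.isChain_append]
    obtain ⟨-, hchain, hhead, hlast⟩ := hp
    grind

lemma not_isInsertable_of_maximalFor {R Q : List V} {u v x : V}
    (hc : MaximalFor (IsDirectedCycle A) Cycle.length (R ++ Q : List V))
    (hR : IsPathList A v u R) (hx : x ∉ R ++ Q) : ¬ IsInsertable A x R := by
  intro hins
  obtain ⟨R', hR', hperm⟩ :=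
    hR.exists_perm_cons (fun h => hx (List.mem_append_left _ h)) hins
  have hnodup := Cycle.nodup_coe_iff.1 hc.prop.nodup
  have hdisj : R'.Disjoint Q := by
    intro w hwR' hwQ
    rcases List.mem_cons.1 (hperm.mem_iff.1 hwR') with rfl | hwR
    exacts [hx (List.mem_append_right _ hwQ), List.disjoint_of_nodup_append hnodup hwR hwQ]
  have hlen := hperm.length_eq
  have hle := hc.le_of_le (hc.prop.replace_segment hR hR' hdisj)
  simp only [Cycle.length_coe, List.length_append, List.length_cons] at hlen hle
  omega

lemma exists_eq_coe_append_of_mem {c : Cycle V} {u v : V} (hu : u ∈ c) (hv : v ∈ c) :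
    ∃ R Q : List V, c = (R ++ Q : List V) ∧ R.head? = some v ∧ R.getLast? = some u := by
  induction c using Quotient.inductionOn' with | _ l
  obtain ⟨s, t, rfl⟩ := List.append_of_mem (Cycle.mem_coe_iff.1 hu)
  have hrot : ((s ++ u :: t : List V) : Cycle V) = (u :: (t ++ s) : List V) :=
    Cycle.coe_eq_coe.2 List.isRotated_append
  rw [Cycle.mk''_eq_coe, hrot, Cycle.mem_coe_iff, List.mem_cons] at hv
  rw [Cycle.mk''_eq_coe, hrot]
  rcases hv with rfl | hv
  · exact ⟨[v], t ++ s, rfl, rfl, rfl⟩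
  · obtain ⟨q, r, hqr⟩ := List.append_of_mem hv
    refine ⟨v :: r ++ [u], q, ?_, rfl, List.getLast?_concat⟩
    rw [hqr, List.append_assoc, ← List.cons_append]
    exact Cycle.coe_eq_coe.2 List.isRotated_append

lemma exists_minimal_segment {P : V → V → Prop} {c : Cycle V} (h : ∃ u ∈ c, ∃ v ∈ c, P u v) :
    ∃ (R Q : List V) (u v : V), c = (R ++ Q : List V) ∧ R.head? = some v ∧ R.getLast? = some u ∧
      P u v ∧ ∀ y ∈ Q, ¬ P u y ∧ ¬ P y v := by
  let IsSegment (RQ : List V × List V) : Prop := ∃ u v, c = (RQ.1 ++ RQ.2 : List V) ∧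
    RQ.1.head? = some v ∧ RQ.1.getLast? = some u ∧ P u v
  have hexists : ∃ RQ, IsSegment RQ := by
    obtain ⟨u, hu, v, hv, huv⟩ := h
    obtain ⟨R, Q, hc, hhead, hlast⟩ := exists_eq_coe_append_of_mem hu hv
    exact ⟨(R, Q), u, v, hc, hhead, hlast, huv⟩
  obtain ⟨⟨R, Q⟩, ⟨u, v, rfl, hhead, hlast, huv⟩, hmin⟩ :=
    exists_minimalFor_of_wellFoundedLT IsSegment (fun RQ => RQ.2.length) hexists
  dsimp only at hhead hlast hmin
  refine ⟨R, Q, u, v, rfl, hhead, hlast, huv, fun y hy => ?_⟩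
  obtain ⟨q₁, q₂, rfl⟩ := List.append_of_mem hy
  constructor
  · intro huy
    have hseg : IsSegment (y :: q₂ ++ R, q₁) := by
      refine ⟨u, y, Cycle.coe_eq_coe.2 ?_, rfl, List.mem_getLast?_append_of_mem_getLast? hlast, huy⟩
      simpa using List.isRotated_append (l := R ++ q₁) (l' := y :: q₂)
    have := hmin hseg (by simp)
    grind
  · intro hyv
    have hseg : IsSegment (R ++ q₁ ++ [y], q₂) :=
      ⟨y, v, by simp, by simp [hhead], List.getLast?_concat, hyv⟩
    have := hmin hseg (by grind)
    grind

lemma reachIn_swap {S : Set V} {x y : V} : ReachIn (Function.swap A) S x y ↔ ReachIn A S y x := by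
  have hrel : (fun u v => u ∈ S ∧ v ∈ S ∧ Function.swap A u v) =
      Function.swap fun u v => u ∈ S ∧ v ∈ S ∧ A u v :=
    funext₂ fun _ _ => propext and_left_comm
  rw [ReachIn, ReachIn, hrel, Relation.reflTransGen_swap]

lemma exists_last_exit {S : Set V} {x z : V} (hx : x ∈ S) (hz : z ∉ S)
    (h : Relation.ReflTransGen A x z) :
    ∃ u ∈ S, ∃ a ∉ S, A u a ∧ ReachIn A Sᶜ a z := by
  suffices (x ∉ S ∧ ReachIn A Sᶜ x z) ∨ ∃ u ∈ S, ∃ a ∉ S, A u a ∧ ReachIn A Sᶜ a z from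
    this.resolve_left fun hx' => hx'.1 hx
  clear hx
  induction h using Relation.ReflTransGen.head_induction_on with
  | refl => exact .inl ⟨hz, .refl⟩
  | @head w w' hww' _ ih =>
    rcases ih with ⟨hw', hreach⟩ | hexit
    · by_cases hw : w ∈ S
      · exact .inr ⟨w, hw, w', hw', hww', hreach⟩
      · exact .inl ⟨hw, .head ⟨hw, hw', hww'⟩ hreach⟩
    · exact .inr hexit

lemma exists_first_entrance {S : Set V} {x z : V} (hx : x ∈ S) (hz : z ∉ S)
    (h : Relation.ReflTransGen A z x) :
    ∃ v ∈ S, ∃ b ∉ S, ReachIn A Sᶜ z b ∧ A b v := by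
  obtain ⟨v, hv, b, hb, hbv, hzb⟩ := exists_last_exit hx hz (Relation.reflTransGen_swap.2 h)
  exact ⟨v, hv, b, hb, reachIn_swap.1 hzb, hbv⟩

lemma IsStrong.exists_hasDetour {S : Set V} (hA : IsStrong A) {x z : V} (hx : x ∈ S)
    (hz : z ∉ S) : ∃ u ∈ S, ∃ v ∈ S, HasDetour A S u v := by
  obtain ⟨u, hu, a, ha, hua, haz⟩ := exists_last_exit hx hz (hA x z)
  obtain ⟨v, hv, b, -, hzb, hbv⟩ := exists_first_entrance hx hz (hA z x)
  exact ⟨u, hu, v, hv, a, b, ha, hua, haz.trans hzb, hbv⟩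

lemma HasDetour.exists_notMem_of_not_hasDetour {S : Set V} {u v : V} (h : HasDetour A S u v) :
    ∃ a ∉ S, ∀ y, ¬ HasDetour A S u y → ¬ HasDetour A S y v →
      (¬ A a y ∧ ¬ A y a) ∧ ∀ w ∉ S, ¬ (A a w ∧ A w y) ∧ ¬ (A y w ∧ A w a) := by
  -- `a` is the first vertex of the detour outside `S`
  obtain ⟨a, b, ha, hua, hab, hbv⟩ := h
  refine ⟨a, ha, fun y huy hyv => ⟨⟨fun hay => ?_, fun hya => ?_⟩, fun w hw => ⟨?_, ?_⟩⟩⟩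
  · exact huy ⟨a, a, ha, hua, .refl, hay⟩
  · exact hyv ⟨a, b, ha, hya, hab, hbv⟩
  · exact fun ⟨haw, hwy⟩ => huy ⟨a, w, ha, hua, .single ⟨ha, hw, haw⟩, hwy⟩
  · exact fun ⟨hyw, hwa⟩ => hyv ⟨w, b, hw, hyw, .head ⟨hw, ha, hwa⟩ hab, hbv⟩

lemma HasDetour.exists_isDirectedCycle {S : Set V} {u v : V} {R : List V}
    (h : HasDetour A S u v) (hR : IsPathList A v u R) (hRS : ∀ w ∈ R, w ∈ S) :
    ∃ c : Cycle V, IsDirectedCycle A c ∧ R.length < c.length := by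
  obtain ⟨a, b, ha, hua, hab, hbv⟩ := h
  obtain ⟨p, hp, hpS⟩ := exists_isPathList_of_reachIn ha hab
  have hdisj : R.Disjoint p := fun w hwR hwp => hpS w hwp (hRS w hwR)
  refine ⟨_, hR.isDirectedCycle_append hp hdisj hua hbv, ?_⟩
  have hpos : 0 < p.length :=
    List.length_pos_of_mem (List.mem_of_mem_head? hp.head?_eq)
  rw [Cycle.length_coe, List.length_append]
  omega

lemma exists_notMem_insertion_of_maximalFor {R R' Q : List V} {u v : V}
    (hc : MaximalFor (IsDirectedCycle A) Cycle.length (R ++ Q : List V))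
    (hdetour : HasDetour A {w | w ∈ R ++ Q} u v) (hR' : IsPathList A v u R') (hRR' : R ⊆ R')
    (hR'RQ : R' ⊆ R ++ Q) : ∃ y ∈ Q, y ∉ R' := by
  by_contra! hQR'
  obtain ⟨c', hc', hlt⟩ := hdetour.exists_isDirectedCycle hR' hR'RQ
  have hle : (R ++ Q).length ≤ R'.length :=
    ((Cycle.nodup_coe_iff.1 hc.prop.nodup).subperm (List.append_subset.2 ⟨hRR', hQR'⟩)).length_le
  exact (hle.trans_lt hlt).not_ge (hc.le_of_le hc' (hle.trans hlt.le))

lemma exists_nonadjacent_of_hasDetour [Finite V] (hirr : ∀ x, ¬ A x x) {c : Cycle V}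
    (hc : MaximalFor (IsDirectedCycle A) Cycle.length c)
    (h : ∃ u ∈ c, ∃ v ∈ c, HasDetour A {w | w ∈ c} u v) :
    ∃ a y, a ≠ y ∧ ¬ A a y ∧ ¬ A y a ∧ degree A a + degree A y + 2 ≤ 2 * Nat.card V := by
  obtain ⟨R, Q, u, v, rfl, hhead, hlast, hdetour, hmin⟩ := exists_minimal_segment h
  simp only [Cycle.mem_coe_iff] at hdetour hmin
  have hR : IsPathList A v u R := hc.prop.isPathList hhead hlast
  obtain ⟨R', hR', hRR', hR'RQ, hins⟩ := hR.exists_maximal_insertion Q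
  obtain ⟨y, hyQ, hyR'⟩ := exists_notMem_insertion_of_maximalFor hc hdetour hR' hRR' hR'RQ
  obtain ⟨a, ha, hfar⟩ := hdetour.exists_notMem_of_not_hasDetour
  have hfarQ (w) (hw : w ∈ Q) := hfar w (hmin w hw).1 (hmin w hw).2
  have hyRQ : y ∈ R ++ Q := List.mem_append_right _ hyQ
  refine ⟨a, y, fun hay => ha (hay ▸ hyRQ), (hfarQ y hyQ).1.1, (hfarQ y hyQ).1.2, ?_⟩
  have hncard {l : List V} (hl : l.Nodup) : {w | w ∈ l}.ncard = l.length := by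
    classical
    rw [← List.coe_toFinset, Set.ncard_coe_finset, List.toFinset_card_of_nodup hl]
  refine degree_add_degree_add_two_le (S := {w | w ∈ R ++ Q}) (T := {w | w ∈ R})
    (T' := {w | w ∈ R'}) hirr hRR' hR'RQ ha hyRQ hyR' (fun w hw => ?_)
    (fun w hw => ((hfarQ y hyQ).2 w hw).1) (fun w hw => ((hfarQ y hyQ).2 w hw).2) ?_ ?_
  · exact (hfarQ w ((List.mem_append.1 hw.1).resolve_left hw.2)).1
  · rw [hncard hR.nodup]
    exact degreeIn_le_length_add_one (not_isInsertable_of_maximalFor hc hR ha)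
  · rw [hncard hR'.nodup]
    exact degreeIn_le_length_add_one (hins y hyQ hyR')

lemma exists_maximalFor_isDirectedCycle [Finite V] (A : V → V → Prop) :
    ∃ c, MaximalFor (IsDirectedCycle A) Cycle.length c := by
  classical
  have := Fintype.ofFinite V
  have hfin : {c | IsDirectedCycle A c}.Finite :=
    (Set.finite_coe_iff.1 (Finite.of_fintype {c : Cycle V // c.Nodup})).subset
      fun _ hc => hc.nodup
  exact hfin.exists_maximalFor Cycle.length _ ⟨Cycle.nil, Cycle.nodup_nil, Cycle.Chain.nil A⟩

lemma IsStrong.exists_isDirectedCycle_one_lt_length [Nontrivial V] (hA : IsStrong A) :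
    ∃ c : Cycle V, IsDirectedCycle A c ∧ 1 < c.length := by
  obtain ⟨x, z, hxz⟩ := exists_pair_ne V
  obtain ⟨_, rfl, _, rfl, hdetour⟩ :=
    hA.exists_hasDetour (Set.mem_singleton x) (Set.notMem_singleton_iff.2 hxz.symm)
  exact hdetour.exists_isDirectedCycle (R := [_]) ⟨by simp, by simp, rfl, rfl⟩ (by simp)

lemma exists_mem_of_cycle_length_pos {c : Cycle V} (h : 0 < c.length) : ∃ x, x ∈ c := by
  induction c using Quotient.inductionOn' with | _ l
  exact List.exists_mem_of_length_pos h

lemma IsDirectedCycle.isHamiltonian [Fintype V] {c : Cycle V} (hc : IsDirectedCycle A c)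
    (hspan : ∀ z, z ∈ c) (hcard : 2 ≤ Fintype.card V) : IsHamiltonian A := by
  classical
  induction c using Quotient.inductionOn' with | _ l
  have hnodup : l.Nodup := hc.nodup
  have hlen : l.length = Fintype.card V := by
    rw [← List.toFinset_card_of_nodup hnodup, Finset.card_eq_iff_eq_univ]
    ext z
    simpa using hspan z
  rw [IsHamiltonian]
  rw [← hlen] at hcard ⊢
  refine ⟨l.get, ⟨hcard, List.nodup_iff_injective_get.1 hnodup, ?_⟩, fun z =>
    List.mem_iff_get.1 (hspan z)⟩
  rintro ⟨i, hi⟩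
  obtain ⟨x, t, rfl⟩ := List.exists_cons_of_length_pos (l := l) (by omega)
  have hchain : (x :: t ++ [x]).IsChain A := hc.chain
  have harc := List.isChain_iff_getElem.1 hchain i (by simpa using hi)
  rw [List.getElem_append_left hi] at harc
  obtain hlt | hlast : i + 1 < (x :: t).length ∨ i + 1 = (x :: t).length := by omega
  · rw [List.getElem_append_left hlt] at harc
    simpa only [List.get_eq_getElem, Nat.mod_eq_of_lt hlt] using harc
  · rw [List.getElem_append_right (by omega)] at harc
    simpa [hlast] using harc

/-- Meyniel's theorem. -/
theorem statement10_general [Fintype V] (hirr : ∀ x, ¬ A x x) (hcard : 2 ≤ Fintype.card V)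
    (hstrong : IsStrong A)
    (hdeg : ∀ x y, x ≠ y → ¬ A x y → ¬ A y x →
      2 * Fintype.card V ≤ degree A x + degree A y + 1) :
    IsHamiltonian A := by
  have : Nontrivial V := Fintype.one_lt_card_iff_nontrivial.1 hcard
  obtain ⟨c, hc⟩ := exists_maximalFor_isDirectedCycle A
  refine hc.prop.isHamiltonian (fun z => by_contra fun hz => ?_) hcard
  obtain ⟨c', hc', hlen⟩ := hstrong.exists_isDirectedCycle_one_lt_length
  obtain ⟨x, hx⟩ : ∃ x, x ∈ c := by
    have hmax := hc.le_of_le hc'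
    exact exists_mem_of_cycle_length_pos (by omega)
  obtain ⟨a, y, hne, hay, hya, hlt⟩ :=
    exists_nonadjacent_of_hasDetour hirr hc (hstrong.exists_hasDetour (S := {w | w ∈ c}) hx hz)
  have hge := hdeg a y hne hay hya
  rw [Nat.card_eq_fintype_card] at hlt
  omega

end Meyniel

/-- Ghouila-Houri: a strong digraph of order `n ≥ 2` in which every vertex has
degree at least `n` is Hamiltonian. -/
theorem statement10 {V : Type*} [Fintype V] [DecidableEq V] (A : V → V → Prop)
    (hirr : Irreflexive A)
    (n : ℕ) (hn2 : 2 ≤ n) (hcard : Fintype.card V = n)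
    (hstrong : IsStrong A)
    (hdeg : ∀ x : V, n ≤ degree A x) :
    IsHamiltonian A := by
  subst hcard
  exact statement10_general hirr hn2 hstrong fun x y _ _ _ => by linarith [hdeg x, hdeg y]
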